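/- Suppose q : W → X is a quotient map between Banach spaces, (x_λ)_{λ∈D_1} ⊂ B_X is a weakly null net, and v is a weak neighborhood of 0 in W. Then for any b > 2, there exist λ ∈ D_1 and w ∈ b·B_W ∩ v such that q(w) = x_λ. -/

import Mathlib

open Filter

/-! In bidual language: lift the net to vectors `w l` with `‖w l‖ ≤ c := b / 2`. A weak-star cluster
point of the lifts is annihilated by `q**`, hence lies in the bidual of `ker q`, and by Goldstine's
theorem it is a weak-star limit of vectors `u ∈ ker q` with `‖u‖ ≤ c`. Some difference `w l - u` is
then weakly small, still lifts `x l`, and has norm at most `2 * c = b`. Since a weak neighborhood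
involves only finitely many functionals, the limits can be taken in `𝕜ⁿ` instead of the bidual. -/

open Metric Set Topology RCLike

section Factorization

variable {R W X Y : Type*} [Ring R]
  [AddCommGroup W] [Module R W] [TopologicalSpace W]
  [AddCommGroup X] [Module R X] [TopologicalSpace X]
  [AddCommGroup Y] [Module R Y] [TopologicalSpace Y]

theorem exists_comp_eq_of_ker_le_ker {q : W →L[R] X} (hq : IsQuotientMap q) {k : W →L[R] Y}
    (hk : q.ker ≤ k.ker) : ∃ φ : X →L[R] Y, φ.comp q = k := by
  let φ : X →ₗ[R] Y := q.ker.liftQ k.toLinearMap hk ∘ₗ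
    (q.toLinearMap.quotKerEquivOfSurjective hq.surjective).symm
  have hφ (w : W) : φ (q w) = k w :=
    congrArg (q.ker.liftQ k.toLinearMap hk)
      (q.toLinearMap.quotKerEquivOfSurjective_symm_apply hq.surjective w)
  have hφ_cont : Continuous φ := by
    rw [hq.continuous_iff, show φ ∘ q = k from funext hφ]
    exact k.continuous
  exact ⟨⟨φ, hφ_cont⟩, ContinuousLinearMap.ext hφ⟩

end Factorization

section RCLike

variable {𝕜 : Type*} [RCLike 𝕜]

section UnitBall

variable {W X : Type*} [SeminormedAddCommGroup W] [NormedSpace 𝕜 W]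
  [SeminormedAddCommGroup X] [NormedSpace 𝕜 X]

theorem ball_subset_image_ball {q : W →L[𝕜] X} (hq : ball 0 1 ⊆ q '' ball 0 1) {r : ℝ}
    (hr : 0 < r) : ball 0 r ⊆ q '' ball 0 r := by
  have hr0 : (r : 𝕜) ≠ 0 := ofReal_ne_zero.mpr hr.ne'
  have hnorm : ‖(r : 𝕜)‖ = r := norm_of_nonneg hr.le
  have hsmul := smul_set_mono (a := (r : 𝕜)) hq
  rwa [← image_smul_set, smul_unitBall hr0, smul_unitBall hr0, hnorm] at hsmul

theorem isQuotientMap_of_ball_subset_image_ball {q : W →L[𝕜] X}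
    (hq : ball 0 1 ⊆ q '' ball 0 1) : IsQuotientMap q := by
  have hopen : IsOpenMap q := by
    rw [IsTopologicalAddGroup.isOpenMap_iff_nhds_zero]
    refine (nhds_basis_ball.map q).ge_iff.mpr fun r hr => ?_
    exact mem_of_superset (ball_mem_nhds 0 hr) (ball_subset_image_ball hq hr)
  have hsurj : Function.Surjective q := fun x => by
    have hx : x ∈ ball 0 (‖x‖ + 1) := mem_ball_zero_iff.mpr (lt_add_one _)
    obtain ⟨w, -, hw⟩ := ball_subset_image_ball hq (by positivity) hx
    exact ⟨w, hw⟩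
  exact hopen.isQuotientMap q.continuous hsurj

end UnitBall

section Helly

variable {V : Type*} [SeminormedAddCommGroup V] [NormedSpace 𝕜 V]

theorem mul_opNorm_le_of_forall_re_le {f : StrongDual 𝕜 V} {c s : ℝ} (hc : 0 < c)
    (hf : ∀ u, ‖u‖ ≤ c → re (f u) ≤ s) : c * ‖f‖ ≤ s := by
  have hs : 0 ≤ s := by simpa using hf 0 (by simpa using hc.le)
  rw [← le_div_iff₀' hc]
  refine f.opNorm_le_of_unit_norm (by positivity) fun u hu => ?_
  obtain ⟨a, ha, hfu⟩ := exists_norm_eq_mul_self (f u)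
  rw [le_div_iff₀' hc]
  calc c * ‖f u‖ = re (f (((c : 𝕜) * a) • u)) := by
        rw [map_smul, smul_eq_mul, mul_assoc, ← hfu, ← ofReal_mul, ofReal_re]
    _ ≤ s := hf _ (by rw [norm_smul, norm_mul, ha, hu, norm_of_nonneg hc.le]; simp)

/-- Helly's form of Goldstine's theorem: `t` plays the role of an element of the bidual of `V` of
norm at most `c`. -/
theorem mem_closure_image_closedBall {E : Type*} [AddCommGroup E] [TopologicalSpace E]
    [IsTopologicalAddGroup E] [Module 𝕜 E] [ContinuousSMul 𝕜 E] [Module ℝ E] [IsScalarTower ℝ 𝕜 E]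
    [LocallyConvexSpace ℝ E] {S : V →L[𝕜] E} {c : ℝ} (hc : 0 < c) {t : E}
    (ht : ∀ a : StrongDual 𝕜 E, ‖a t‖ ≤ c * ‖a.comp S‖) : t ∈ closure (S '' closedBall 0 c) := by
  let : NormedSpace ℝ V := NormedSpace.restrictScalars ℝ 𝕜 V
  have : IsScalarTower ℝ 𝕜 V := RestrictScalars.isScalarTower ℝ 𝕜 V
  have : ContinuousSMul ℝ E := IsScalarTower.continuousSMul 𝕜
  by_contra hnot
  have hconv : Convex ℝ (closure (S '' closedBall 0 c)) :=
    ((convex_closedBall 0 c).linear_image (S.toLinearMap.restrictScalars ℝ)).closure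
  obtain ⟨a, s, has, hst⟩ := geometric_hahn_banach_closed_point (𝕜 := 𝕜) hconv isClosed_closure hnot
  have hle : c * ‖a.comp S‖ ≤ s := mul_opNorm_le_of_forall_re_le hc fun u hu =>
    (has (S u) (subset_closure ⟨u, mem_closedBall_zero_iff.mpr hu, rfl⟩)).le
  exact (((re_le_norm (a t)).trans (ht a)).trans hle).not_gt hst

end Helly

section WeaklyNull

variable {W X ι : Type*} [SeminormedAddCommGroup W] [NormedSpace 𝕜 W]
  [SeminormedAddCommGroup X] [NormedSpace 𝕜 X] {q : W →L[𝕜] X} {l : Filter ι} {w : ι → W} {c : ℝ}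

theorem exists_eq_add_comp_norm_eq (hq : IsQuotientMap q) (g : StrongDual 𝕜 W) :
    ∃ (h : StrongDual 𝕜 W) (φ : StrongDual 𝕜 X),
      g = h + φ.comp q ∧ ‖h‖ = ‖g.comp q.ker.subtypeL‖ := by
  obtain ⟨h, hext, hnorm⟩ := exists_extension_norm_eq q.ker (g.comp q.ker.subtypeL)
  have hker : q.ker ≤ (g - h).ker := fun u hu => sub_eq_zero.mpr (hext ⟨u, hu⟩).symm
  obtain ⟨φ, hφ⟩ := exists_comp_eq_of_ker_le_ker hq hker
  exact ⟨h, φ, by rw [hφ, add_sub_cancel], hnorm⟩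

theorem norm_le_of_tendsto_of_weakly_null [l.NeBot] (hq : IsQuotientMap q)
    (hw : ∀ᶠ i in l, ‖w i‖ ≤ c) (hnull : ∀ φ : StrongDual 𝕜 X, Tendsto (φ <| q <| w ·) l (𝓝 0))
    {g : StrongDual 𝕜 W} {y : 𝕜} (hy : Tendsto (g <| w ·) l (𝓝 y)) :
    ‖y‖ ≤ c * ‖g.comp q.ker.subtypeL‖ := by
  obtain ⟨h, φ, hg, hnorm⟩ := exists_eq_add_comp_norm_eq hq g
  have hlim : Tendsto (h <| w ·) l (𝓝 y) := by simpa [hg] using hy.sub (hnull φ)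
  rw [← hnorm, mul_comm]
  exact le_of_tendsto hlim.norm (hw.mono fun i hi => h.le_opNorm_of_le hi)

theorem eventually_exists_mem_ker_norm_sub_lt (hq : IsQuotientMap q) (hc : 0 < c)
    (hw : ∀ᶠ i in l, ‖w i‖ ≤ c) (hnull : ∀ φ : StrongDual 𝕜 X, Tendsto (φ <| q <| w ·) l (𝓝 0))
    (F : Finset (StrongDual 𝕜 W)) {δ : ℝ} (hδ : 0 < δ) :
    ∀ᶠ i in l, ∃ u ∈ q.ker, ‖u‖ ≤ c ∧ ∀ f ∈ F, ‖f (w i - u)‖ < δ := by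
  let T : W →L[𝕜] (F → 𝕜) := ContinuousLinearMap.pi Subtype.val
  refine mem_iff_ultrafilter.mpr fun U hU => ?_
  obtain ⟨t, -, ht⟩ : ∃ t ∈ closedBall 0 (‖T‖ * c), Tendsto (T <| w ·) U (𝓝 t) := by
    refine (isCompact_closedBall 0 (‖T‖ * c)).ultrafilter_le_nhds (U.map (T <| w ·))
      (tendsto_principal.mpr ?_)
    filter_upwards [hU hw] with i hi using mem_closedBall_zero_iff.mpr (T.le_opNorm_of_le hi)
  have ht_mem : t ∈ closure (T.comp q.ker.subtypeL '' closedBall 0 c) :=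
    mem_closure_image_closedBall hc fun a =>
      norm_le_of_tendsto_of_weakly_null (g := a.comp T) hq (hU hw)
        (fun φ => (hnull φ).mono_left hU) ((a.continuous.tendsto t).comp ht)
  obtain ⟨_, ⟨u, hu, rfl⟩, hut⟩ := Metric.mem_closure_iff.mp ht_mem (δ / 2) (half_pos hδ)
  filter_upwards [ht (ball_mem_nhds t (half_pos hδ))] with i hi
  refine ⟨u, u.2, mem_closedBall_zero_iff.mp hu, fun f hf => ?_⟩
  calc ‖f (w i - u)‖ = ‖T (w i - u) ⟨f, hf⟩‖ := rfl
    _ ≤ ‖T (w i - u)‖ := norm_le_pi_norm _ _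
    _ = dist (T (w i)) (T u) := by rw [map_sub, dist_eq_norm]
    _ ≤ dist (T (w i)) t + dist t (T u) := dist_triangle _ _ _
    _ < δ / 2 + δ / 2 := add_lt_add hi hut
    _ = δ := add_halves δ

theorem quotient_lift_of_weakly_null_general (hq : ball 0 1 ⊆ q '' ball 0 1) {x : ι → X}
    (hx : ∀ᶠ i in l, ‖x i‖ ≤ 1) (hnull : ∀ φ : StrongDual 𝕜 X, Tendsto (φ <| x ·) l (𝓝 0))
    (F : Finset (StrongDual 𝕜 W)) {δ : ℝ} (hδ : 0 < δ) {b : ℝ} (hb : 2 < b) :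
    ∀ᶠ i in l, ∃ w : W, ‖w‖ ≤ b ∧ (∀ f ∈ F, ‖f w‖ < δ) ∧ q w = x i := by
  have hquot := isQuotientMap_of_ball_subset_image_ball hq
  have hc : 0 < b / 2 := by linarith
  rcases l.eq_or_neBot with rfl | _
  · exact eventually_bot
  obtain ⟨w, hw⟩ : ∃ w : ι → W, ∀ᶠ i in l, w i ∈ ball 0 (b / 2) ∧ q (w i) = x i :=
    (hx.mono fun i hi =>
      ball_subset_image_ball hq hc (mem_ball_zero_iff.mpr (by linarith))).choice
  have hwc : ∀ᶠ i in l, ‖w i‖ ≤ b / 2 := hw.mono fun i hi => (mem_ball_zero_iff.mp hi.1).le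
  have hqw : ∀ᶠ i in l, q (w i) = x i := hw.mono fun i hi => hi.2
  have hnull_lift (φ : StrongDual 𝕜 X) : Tendsto (φ <| q <| w ·) l (𝓝 0) :=
    (hnull φ).congr' (hqw.mono fun i hi => congrArg φ hi.symm)
  filter_upwards [hwc, hqw, eventually_exists_mem_ker_norm_sub_lt hquot hc hwc hnull_lift F hδ]
    with i hi hqi ⟨u, hqu, hu, hF⟩
  refine ⟨w i - u, ?_, hF, ?_⟩
  · linarith [norm_sub_le (w i) u]
  · rw [map_sub, hqi, show q u = 0 from hqu, sub_zero]

end WeaklyNull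

end RCLike

/-- If `q : W → X` is a quotient map (it maps the open unit ball of `W` onto
the open unit ball of `X`), `(x_λ)_{λ ∈ D₁} ⊆ B_X` is a weakly null net, and `v` is a weak
neighborhood of `0` in `W`, then for every `b > 2` there are `λ ∈ D₁` and `w ∈ b·B_W ∩ v`
with `q w = x_λ`. -/
theorem quotient_lift_of_weakly_null {W X : Type*}
    [NormedAddCommGroup W] [NormedSpace ℝ W] [NormedAddCommGroup X] [NormedSpace ℝ X]
    (q : W →L[ℝ] X) (hq : q '' Metric.ball (0 : W) 1 = Metric.ball (0 : X) 1)
    {D₁ : Type*} [Preorder D₁] [IsDirected D₁ (· ≤ ·)] [Nonempty D₁]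
    (x : D₁ → X) (hxball : ∀ l, x l ∈ Metric.closedBall (0 : X) 1)
    (hweak : ∀ f : X →L[ℝ] ℝ, Filter.Tendsto (fun l => f (x l)) Filter.atTop (nhds 0))
    (v : Set W)
    (hv : ∃ (F : Finset (W →L[ℝ] ℝ)) (δ : ℝ), 0 < δ ∧ {w : W | ∀ f ∈ F, |f w| < δ} ⊆ v)
    (b : ℝ) (hb : 2 < b) :
    ∃ (l : D₁) (w : W), ‖w‖ ≤ b ∧ w ∈ v ∧ q w = x l := by
  obtain ⟨F, δ, hδ, hFv⟩ := hv
  obtain ⟨l, w, hwb, hwF, hqw⟩ := (quotient_lift_of_weakly_null_general hq.superset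
    (.of_forall fun l => mem_closedBall_zero_iff.mp (hxball l)) hweak F hδ hb).exists
  exact ⟨l, w, hwb, hFv hwF, hqw⟩
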